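/- Let T_e denote the bounded operator on L²(X,μ) given by T_e φ = Φ_{f_e⁻¹}^{1/2}·(φ∘f_e⁻¹) on R_e and 0 elsewhere, and P_v = M_{χ_{D_v}}. Then: (i) for every v ∈ G⁰ \ V, P_v − Σ_{e ∈ s⁻¹(v)} T_e T_e* equals the multiplication operator by the indicator of D_v \ ⋃_{e ∈ s⁻¹(v)} R_e; and (ii) for every e ∈ G¹ with r(e) = v ∉ V, the operator T_e ∘ (Σ_{f ∈ s⁻¹(v)} T_f T_f*) sends each φ ∈ L²(X,μ) to the function agreeing μ-a.e. with χ_{Q_e}·Φ_{f_e⁻¹}^{1/2}·(φ∘f_e⁻¹), where Q_e = (f_e⁻¹)⁻¹(⋃_{f ∈ s⁻¹(v)} R_f). -/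

import Mathlib

open MeasureTheory Set
open scoped ENNReal NNReal

section

variable {V0 E1 X : Type*}

/-- A relative `G`-branching system, relative to a set `V` of vertices, on a measure space
`(X, μ)`, for a directed graph with vertices `V0`, edges `E1`, range map `r` and source map
`s`. The data consists of measurable sets `R e` (for edges) and `D v` (for vertices),
together with measurable maps `f e : D (r e) → R e` and `finv e : R e → D (r e)` that are
mutually inverse `μ`-a.e. and whose pushforward measures are absolutely continuous w.r.t.
`μ`. -/
structure RelBranchingSystem [MeasurableSpace X] (r s : E1 → V0) (V : Set V0)
    (μ : Measure X) (R : E1 → Set X) (D : V0 → Set X) (f finv : E1 → X → X) : Prop where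
  measR : ∀ e, MeasurableSet (R e)
  measD : ∀ v, MeasurableSet (D v)
  measf : ∀ e, Measurable (f e)
  measfinv : ∀ e, Measurable (finv e)
  disjR : ∀ e e', e ≠ e' → μ (R e ∩ R e') = 0
  disjD : ∀ u v, u ≠ v → μ (D u ∩ D v) = 0
  RsubD : ∀ e, μ (R e \ D (s e)) = 0
  CK : ∀ v ∈ V, (∃ e, s e = v) → μ (symmDiff (D v) (⋃ e ∈ {e' | s e' = v}, R e)) = 0
  mapsf : ∀ e, MapsTo (f e) (D (r e)) (R e)
  mapsfinv : ∀ e, MapsTo (finv e) (R e) (D (r e))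
  inv_right : ∀ e, ∀ᵐ x ∂μ.restrict (R e), f e (finv e x) = x
  inv_left : ∀ e, ∀ᵐ t ∂μ.restrict (D (r e)), finv e (f e t) = t
  ac_f : ∀ e, (μ.restrict (D (r e))).map (f e) ≪ μ
  ac_finv : ∀ e, (μ.restrict (R e)).map (finv e) ≪ μ

/-- The Radon–Nikodym derivative of the pushforward of `μ` restricted to `S` under `h`,
with respect to `μ`.  Taking `S = D (r e)`, `h = f e` gives `Φ_{f_e⁻¹}`, and taking
`S = R e`, `h = finv e` gives `Φ_{f_e}`. -/
noncomputable def pushDeriv [MeasurableSpace X] (μ : Measure X) (S : Set X) (h : X → X) :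
    X → ℝ≥0∞ :=
  ((μ.restrict S).map h).rnDeriv μ

/-- The function `x ↦ χ_{R e}(x) · Φ_{f_e⁻¹}(x)^{1/2} · φ(f_e⁻¹ x)`, i.e. the prospective
action of the partial isometry `T_e` on a function `φ`. -/
noncomputable def Taction [MeasurableSpace X] (μ : Measure X) (Re DRe : Set X)
    (fe finve : X → X) (φ : X → ℂ) : X → ℂ :=
  Re.indicator fun x => (Real.sqrt ((pushDeriv μ DRe fe x).toReal) : ℂ) * φ (finve x)

/-!
Each `f e` is an invertible nonsingular transformation of `D (r e)` onto `R e`. The two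
Radon–Nikodym derivatives attached to such a transformation satisfy the chain rule
`Φ_{f⁻¹} · (Φ_f ∘ f⁻¹) = 1` on `R e`, and the change of variables formula then identifies the
adjoint of `φ ↦ Φ_{f⁻¹}^{1/2} (φ ∘ f⁻¹)` with `ψ ↦ Φ_f^{1/2} (ψ ∘ f)`. Hence `T_e T_e*` is
multiplication by the indicator of `R e`. The sets `R e` being a.e. disjoint, the sum over the edges
leaving `v` is multiplication by the indicator of their union, which is a.e. contained in `D v`;
part (ii) is then the transport of this indicator through `T_e`.
-/

section Indicator

variable {α ι M : Type*} [MeasurableSpace α] {μ : Measure α}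

lemma indicator_sub_indicator_ae_eq [AddGroup M] {A B : Set α} (hBA : B ≤ᵐ[μ] A) (φ : α → M) :
    A.indicator φ - B.indicator φ =ᵐ[μ] (A \ B).indicator φ := by
  filter_upwards [hBA] with x hx
  by_cases hB : x ∈ B
  · have hA : x ∈ A := hx hB
    simp [hA, hB]
  · by_cases hA : x ∈ A <;> simp [hA, hB]

lemma sum_indicator_ae_eq_indicator_biUnion [AddCommMonoid M] {A : ι → Set α} (F : Finset ι)
    (hA : (F : Set ι).Pairwise (Function.onFun (AEDisjoint μ) A)) (φ : α → M) :
    (fun x => ∑ i ∈ F, (A i).indicator φ x) =ᵐ[μ] (⋃ i ∈ F, A i).indicator φ := by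
  have hdisj : ∀ᵐ x ∂μ, ∀ i ∈ F, ∀ j ∈ F, i ≠ j → x ∉ A i ∩ A j := by
    simp only [Filter.eventually_all_finset, Filter.eventually_imp_distrib_left]
    exact fun i hi j hj hij => measure_eq_zero_iff_ae_notMem.1 (hA hi hj hij)
  filter_upwards [hdisj] with x hx
  by_cases hxU : x ∈ ⋃ i ∈ F, A i
  · obtain ⟨i, hi, hxi⟩ := mem_iUnion₂.1 hxU
    rw [indicator_of_mem hxU, Finset.sum_eq_single_of_mem i hi, indicator_of_mem hxi]
    exact fun j hj hji => indicator_of_notMem (fun hxj => hx j hj i hi hji ⟨hxj, hxi⟩) φ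
  · rw [indicator_of_notMem hxU]
    exact Finset.sum_eq_zero fun i hi =>
      indicator_of_notMem (fun hxi => hxU (mem_biUnion hi hxi)) φ

end Indicator

/-- `f` is, up to null sets, an invertible nonsingular transformation from `D` onto `R` with inverse
`g`: the relation that a branching system requires of `D (r e)`, `R e`, `f e`, `finv e` for a
single edge `e`. As there, maps between `D` and `R` are encoded by total functions on `X`. -/
structure IsNonsingularIso [MeasurableSpace X] (μ : Measure X) (D R : Set X) (f g : X → X) :
    Prop where
  measurableSet_source : MeasurableSet D
  measurableSet_target : MeasurableSet R
  measurable : Measurable f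
  measurable_inv : Measurable g
  mapsTo : MapsTo f D R
  mapsTo_inv : MapsTo g R D
  left_inv : ∀ᵐ t ∂μ.restrict D, g (f t) = t
  right_inv : ∀ᵐ x ∂μ.restrict R, f (g x) = x
  map_ac : (μ.restrict D).map f ≪ μ
  map_inv_ac : (μ.restrict R).map g ≪ μ

lemma measurable_pushDeriv [MeasurableSpace X] (μ : Measure X) (S : Set X) (h : X → X) :
    Measurable (pushDeriv μ S h) :=
  Measure.measurable_rnDeriv _ _

lemma Taction_indicator [MeasurableSpace X] (μ : Measure X) (R D U : Set X) (f g : X → X)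
    (φ : X → ℂ) :
    Taction μ R D f g (U.indicator φ) =
      (R ∩ g ⁻¹' U).indicator fun x => (√(pushDeriv μ D f x).toReal : ℂ) * φ (g x) := by
  ext x
  by_cases hR : x ∈ R <;> by_cases hU : g x ∈ U <;> simp [Taction, hR, hU]

namespace IsNonsingularIso

variable [MeasurableSpace X] {μ : Measure X} {D R : Set X} {f g : X → X}

lemma symm (h : IsNonsingularIso μ D R f g) : IsNonsingularIso μ R D g f where
  measurableSet_source := h.measurableSet_target
  measurableSet_target := h.measurableSet_source
  measurable := h.measurable_inv
  measurable_inv := h.measurable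
  mapsTo := h.mapsTo_inv
  mapsTo_inv := h.mapsTo
  left_inv := h.right_inv
  right_inv := h.left_inv
  map_ac := h.map_inv_ac
  map_inv_ac := h.map_ac

lemma quasiMeasurePreserving_inv (h : IsNonsingularIso μ D R f g) :
    Measure.QuasiMeasurePreserving g (μ.restrict R) μ :=
  ⟨h.measurable_inv, h.map_inv_ac⟩

lemma map_inv_map_restrict (h : IsNonsingularIso μ D R f g) :
    ((μ.restrict D).map f).map g = μ.restrict D := by
  have hgf : g ∘ f =ᵐ[μ.restrict D] id := h.left_inv
  rw [Measure.map_map h.measurable_inv h.measurable, Measure.map_congr hgf, Measure.map_id]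

lemma restrict_map_restrict (h : IsNonsingularIso μ D R f g) :
    ((μ.restrict D).map f).restrict R = (μ.restrict D).map f := by
  rw [Measure.restrict_map h.measurable h.measurableSet_target,
    Measure.restrict_restrict (h.measurable h.measurableSet_target),
    inter_eq_self_of_subset_right h.mapsTo.subset_preimage]

section ChangeOfVariables

variable [SigmaFinite μ]

lemma sigmaFinite_map_restrict (h : IsNonsingularIso μ D R f g) :
    SigmaFinite ((μ.restrict D).map f) :=
  SigmaFinite.of_map _ h.measurable_inv.aemeasurable <| by
    rw [h.map_inv_map_restrict]; infer_instance

lemma pushDeriv_lt_top (h : IsNonsingularIso μ D R f g) : ∀ᵐ x ∂μ, pushDeriv μ D f x < ∞ :=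
  have := h.sigmaFinite_map_restrict
  Measure.rnDeriv_lt_top _ _

lemma withDensity_pushDeriv (h : IsNonsingularIso μ D R f g) :
    (μ.restrict R).withDensity (pushDeriv μ D f) = (μ.restrict D).map f := by
  have := h.sigmaFinite_map_restrict
  rw [← restrict_withDensity h.measurableSet_target, pushDeriv,
    Measure.withDensity_rnDeriv_eq _ _ h.map_ac, h.restrict_map_restrict]

lemma setLIntegral_pushDeriv_mul_comp (h : IsNonsingularIso μ D R f g) {F : X → ℝ≥0∞}
    (hF : Measurable F) :
    ∫⁻ x in R, pushDeriv μ D f x * F (g x) ∂μ = ∫⁻ t in D, F t ∂μ := by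
  rw [← h.map_inv_map_restrict, lintegral_map hF h.measurable_inv, ← h.withDensity_pushDeriv]
  exact (lintegral_withDensity_eq_lintegral_mul _ (measurable_pushDeriv μ D f)
    (hF.comp h.measurable_inv)).symm

lemma setIntegral_pushDeriv_smul_comp {E : Type*} [NormedAddCommGroup E] [NormedSpace ℝ E]
    (h : IsNonsingularIso μ D R f g) {F : X → E} (hF : AEStronglyMeasurable F (μ.restrict D)) :
    ∫ x in R, (pushDeriv μ D f x).toReal • F (g x) ∂μ = ∫ t in D, F t ∂μ := by
  rw [← integral_withDensity_eq_integral_toReal_smul (measurable_pushDeriv μ D f)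
    (ae_restrict_of_ae h.pushDeriv_lt_top) (fun x => F (g x)), h.withDensity_pushDeriv,
    ← integral_map h.measurable_inv.aemeasurable (by rwa [h.map_inv_map_restrict]),
    h.map_inv_map_restrict]

lemma integrableOn_pushDeriv_smul_comp_iff {E : Type*} [NormedAddCommGroup E] [NormedSpace ℝ E]
    (h : IsNonsingularIso μ D R f g) {F : X → E} (hF : AEStronglyMeasurable F (μ.restrict D)) :
    IntegrableOn (fun x => (pushDeriv μ D f x).toReal • F (g x)) R μ ↔ IntegrableOn F D μ := by
  rw [IntegrableOn, ← integrable_withDensity_iff_integrable_smul' (measurable_pushDeriv μ D f)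
    (ae_restrict_of_ae h.pushDeriv_lt_top) (g := fun x => F (g x)), h.withDensity_pushDeriv,
    ← Function.comp_def,
    ← integrable_map_measure (by rwa [h.map_inv_map_restrict]) h.measurable_inv.aemeasurable,
    h.map_inv_map_restrict, IntegrableOn]

theorem pushDeriv_mul_pushDeriv_inv (h : IsNonsingularIso μ D R f g) :
    ∀ᵐ x ∂μ.restrict R, pushDeriv μ D f x * pushDeriv μ R g (g x) = 1 := by
  have hΦ := measurable_pushDeriv μ D f
  have hΨ := measurable_pushDeriv μ R g
  refine ae_eq_of_forall_setLIntegral_eq_of_sigmaFinite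
    (hΦ.mul (hΨ.comp h.measurable_inv)) measurable_one fun A hA _ => ?_
  let χ : X → ℝ≥0∞ := A.indicator 1
  have hχ : Measurable χ := measurable_one.indicator hA
  calc ∫⁻ x in A, pushDeriv μ D f x * pushDeriv μ R g (g x) ∂μ.restrict R
      = ∫⁻ x in R, pushDeriv μ D f x * (pushDeriv μ R g (g x) * χ (f (g x))) ∂μ := by
        rw [← lintegral_indicator hA]
        refine lintegral_congr_ae ?_
        filter_upwards [h.right_inv] with x hx
        by_cases hxA : x ∈ A <;> simp [χ, hx, hxA]
    _ = ∫⁻ t in D, pushDeriv μ R g t * χ (f t) ∂μ :=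
        h.setLIntegral_pushDeriv_mul_comp (F := fun t => pushDeriv μ R g t * χ (f t))
          (hΨ.mul (hχ.comp h.measurable))
    _ = ∫⁻ x in R, χ x ∂μ := h.symm.setLIntegral_pushDeriv_mul_comp hχ
    _ = ∫⁻ _ in A, 1 ∂μ.restrict R := lintegral_indicator hA 1

lemma sqrt_pushDeriv_mul_sqrt_pushDeriv_inv (h : IsNonsingularIso μ D R f g) :
    ∀ᵐ x ∂μ.restrict R, √(pushDeriv μ D f x).toReal * √(pushDeriv μ R g (g x)).toReal = 1 := by
  filter_upwards [h.pushDeriv_mul_pushDeriv_inv] with x hx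
  rw [← Real.sqrt_mul ENNReal.toReal_nonneg, ← ENNReal.toReal_mul, hx, ENNReal.toReal_one,
    Real.sqrt_one]

end ChangeOfVariables

section WeightedComposition

lemma Taction_congr_ae (h : IsNonsingularIso μ D R f g) {φ ψ : X → ℂ} (hφψ : φ =ᵐ[μ] ψ) :
    Taction μ R D f g φ =ᵐ[μ] Taction μ R D f g ψ := by
  refine (ae_eq_restrict_iff_indicator_ae_eq h.measurableSet_target).1 ?_
  filter_upwards [h.quasiMeasurePreserving_inv.ae_eq_comp hφψ] with x hx
  simp only [Function.comp_apply] at hx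
  rw [hx]

lemma aestronglyMeasurable_Taction (h : IsNonsingularIso μ D R f g) {φ : X → ℂ}
    (hφ : AEStronglyMeasurable φ μ) : AEStronglyMeasurable (Taction μ R D f g φ) μ := by
  have hΦ : Measurable fun x => (√(pushDeriv μ D f x).toReal : ℂ) :=
    Complex.measurable_ofReal.comp (measurable_pushDeriv μ D f).ennreal_toReal.sqrt
  exact (aestronglyMeasurable_indicator_iff h.measurableSet_target).2 <|
    hΦ.aestronglyMeasurable.mul (hφ.comp_quasiMeasurePreserving h.quasiMeasurePreserving_inv)

variable [SigmaFinite μ]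

lemma memLp_two_Taction (h : IsNonsingularIso μ D R f g) {φ : X → ℂ} (hφ : MemLp φ 2 μ) :
    MemLp (Taction μ R D f g φ) 2 μ := by
  have hsq : ∀ x, ‖Taction μ R D f g φ x‖ ^ 2 =
      R.indicator (fun x => (pushDeriv μ D f x).toReal • ‖φ (g x)‖ ^ 2) x := by
    intro x
    by_cases hx : x ∈ R <;> simp [Taction, hx, mul_pow]
  rw [memLp_two_iff_integrable_sq_norm (h.aestronglyMeasurable_Taction hφ.1)]
  simp only [hsq]
  rw [integrable_indicator_iff h.measurableSet_target,
    h.integrableOn_pushDeriv_smul_comp_iff (F := fun t => ‖φ t‖ ^ 2) (hφ.1.norm.pow 2).restrict]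
  exact ((memLp_two_iff_integrable_sq_norm hφ.1).1 hφ).integrableOn

theorem integral_inner_Taction_inv_left (h : IsNonsingularIso μ D R f g) {φ ψ : X → ℂ}
    (hφ : AEStronglyMeasurable φ μ) (hψ : AEStronglyMeasurable ψ μ) :
    ∫ t, inner ℂ (Taction μ D R g f ψ t) (φ t) ∂μ =
      ∫ x, inner ℂ (ψ x) (Taction μ R D f g φ x) ∂μ := by
  let F : X → ℂ := fun t => inner ℂ (Taction μ D R g f ψ t) (φ t)
  have hF : AEStronglyMeasurable F μ := (h.symm.aestronglyMeasurable_Taction hψ).inner hφ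
  calc ∫ t, F t ∂μ
      = ∫ t in D, F t ∂μ :=
        (setIntegral_eq_integral_of_forall_compl_eq_zero fun t ht => by
          simp [F, Taction, ht]).symm
    _ = ∫ x in R, (pushDeriv μ D f x).toReal • F (g x) ∂μ :=
        (h.setIntegral_pushDeriv_smul_comp hF.restrict).symm
    _ = ∫ x in R, inner ℂ (ψ x) (Taction μ R D f g φ x) ∂μ := by
        refine integral_congr_ae ?_
        filter_upwards [h.right_inv, h.sqrt_pushDeriv_mul_sqrt_pushDeriv_inv,
          ae_restrict_mem h.measurableSet_target] with x hfg hΦΨ hx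
        have hΦ : (pushDeriv μ D f x).toReal * √(pushDeriv μ R g (g x)).toReal =
            √(pushDeriv μ D f x).toReal := by
          rw [← Real.mul_self_sqrt (x := (pushDeriv μ D f x).toReal) ENNReal.toReal_nonneg,
            mul_assoc, hΦΨ, mul_one, Real.sqrt_mul_self (Real.sqrt_nonneg _)]
        simp only [F, Taction, indicator_of_mem hx, indicator_of_mem (h.mapsTo_inv hx), hfg,
          RCLike.inner_apply, map_mul, Complex.conj_ofReal, Complex.real_smul, ← hΦ,
          Complex.ofReal_mul]
        ring
    _ = ∫ x, inner ℂ (ψ x) (Taction μ R D f g φ x) ∂μ :=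
        setIntegral_eq_integral_of_forall_compl_eq_zero fun x hx => by simp [Taction, hx]

lemma Taction_Taction_inv (h : IsNonsingularIso μ D R f g) (ψ : X → ℂ) :
    Taction μ R D f g (Taction μ D R g f ψ) =ᵐ[μ] R.indicator ψ := by
  refine (ae_eq_restrict_iff_indicator_ae_eq h.measurableSet_target).1 ?_
  filter_upwards [h.right_inv, h.sqrt_pushDeriv_mul_sqrt_pushDeriv_inv,
    ae_restrict_mem h.measurableSet_target] with x hfg hΦΨ hx
  rw [Taction, indicator_of_mem (h.mapsTo_inv hx), hfg, ← mul_assoc, ← Complex.ofReal_mul, hΦΨ,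
    Complex.ofReal_one, one_mul]

theorem adjoint_ae_eq_Taction_inv (h : IsNonsingularIso μ D R f g)
    {T : Lp ℂ 2 μ →L[ℂ] Lp ℂ 2 μ} (hT : ∀ φ : Lp ℂ 2 μ, T φ =ᵐ[μ] Taction μ R D f g φ)
    (ψ : Lp ℂ 2 μ) :
    ContinuousLinearMap.adjoint T ψ =ᵐ[μ] Taction μ D R g f ψ := by
  have hmem := h.symm.memLp_two_Taction (Lp.memLp ψ)
  suffices ContinuousLinearMap.adjoint T ψ = hmem.toLp from this ▸ hmem.coeFn_toLp
  refine ext_inner_right ℂ fun φ => ?_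
  rw [ContinuousLinearMap.adjoint_inner_left, L2.inner_def, L2.inner_def]
  calc ∫ x, inner ℂ (ψ x) (T φ x) ∂μ
      = ∫ x, inner ℂ (ψ x) (Taction μ R D f g φ x) ∂μ :=
        integral_congr_ae <| (hT φ).mono fun x hx => by simp only [hx]
    _ = ∫ t, inner ℂ (Taction μ D R g f ψ t) (φ t) ∂μ :=
        (h.integral_inner_Taction_inv_left (Lp.aestronglyMeasurable φ)
          (Lp.aestronglyMeasurable ψ)).symm
    _ = ∫ t, inner ℂ (hmem.toLp _ t) (φ t) ∂μ :=
        integral_congr_ae <| hmem.coeFn_toLp.mono fun t ht => by simp only [ht]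

theorem comp_adjoint_ae_eq_indicator (h : IsNonsingularIso μ D R f g)
    {T : Lp ℂ 2 μ →L[ℂ] Lp ℂ 2 μ} (hT : ∀ φ : Lp ℂ 2 μ, T φ =ᵐ[μ] Taction μ R D f g φ)
    (ψ : Lp ℂ 2 μ) :
    (T ∘L ContinuousLinearMap.adjoint T) ψ =ᵐ[μ] R.indicator ψ :=
  (hT _).trans <|
    (h.Taction_congr_ae (h.adjoint_ae_eq_Taction_inv hT ψ)).trans (h.Taction_Taction_inv ψ)

end WeightedComposition

end IsNonsingularIso

namespace RelBranchingSystem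

variable [MeasurableSpace X] {μ : Measure X} {r s : E1 → V0} {V : Set V0} {R : E1 → Set X}
  {D : V0 → Set X} {f finv : E1 → X → X}

lemma isNonsingularIso (h : RelBranchingSystem r s V μ R D f finv) (e : E1) :
    IsNonsingularIso μ (D (r e)) (R e) (f e) (finv e) where
  measurableSet_source := h.measD (r e)
  measurableSet_target := h.measR e
  measurable := h.measf e
  measurable_inv := h.measfinv e
  mapsTo := h.mapsf e
  mapsTo_inv := h.mapsfinv e
  left_inv := h.inv_left e
  right_inv := h.inv_right e
  map_ac := h.ac_f e
  map_inv_ac := h.ac_finv e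

lemma biUnion_ae_le (h : RelBranchingSystem r s V μ R D f finv) {v : V0} {F : Finset E1}
    (hF : ∀ e ∈ F, s e = v) : (⋃ e ∈ F, R e : Set X) ≤ᵐ[μ] D v := by
  have hR : ∀ e ∈ F, R e ≤ᵐ[μ] D v := fun e he => hF e he ▸ ae_le_set.2 (h.RsubD e)
  exact (Filter.EventuallyLE.biUnion F.finite_toSet hR).trans
    (iUnion₂_subset fun _ _ => Subset.rfl).eventuallyLE

theorem sum_comp_adjoint_ae_eq_indicator [SigmaFinite μ]
    (h : RelBranchingSystem r s V μ R D f finv) {T : E1 → Lp ℂ 2 μ →L[ℂ] Lp ℂ 2 μ}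
    (hT : ∀ e, ∀ φ : Lp ℂ 2 μ, T e φ =ᵐ[μ] Taction μ (R e) (D (r e)) (f e) (finv e) φ)
    (F : Finset E1) (φ : Lp ℂ 2 μ) :
    (∑ e ∈ F, T e ∘L ContinuousLinearMap.adjoint (T e)) φ =ᵐ[μ]
      (⋃ e ∈ F, R e).indicator φ := by
  have hterm : ∀ᵐ x ∂μ, ∀ e ∈ F,
      (T e ∘L ContinuousLinearMap.adjoint (T e)) φ x = (R e).indicator φ x :=
    (Filter.eventually_all_finset F).2 fun e _ =>
      (h.isNonsingularIso e).comp_adjoint_ae_eq_indicator (hT e) φ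
  rw [sum_apply]
  refine (Lp.coeFn_fun_finsetSum _ _).trans <| .trans ?_ <|
    sum_indicator_ae_eq_indicator_biUnion F (fun e _ e' _ hee' => h.disjR e e' hee') φ
  filter_upwards [hterm] with x hx using Finset.sum_congr rfl hx

end RelBranchingSystem

theorem statement6_general [MeasurableSpace X] {μ : Measure X} [SigmaFinite μ]
    {r s : E1 → V0} {V : Set V0} {R : E1 → Set X} {D : V0 → Set X} {f finv : E1 → X → X}
    (hbs : RelBranchingSystem r s V μ R D f finv) {T : E1 → Lp ℂ 2 μ →L[ℂ] Lp ℂ 2 μ}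
    (hT : ∀ e, ∀ φ : Lp ℂ 2 μ, T e φ =ᵐ[μ] Taction μ (R e) (D (r e)) (f e) (finv e) φ)
    {P : V0 → Lp ℂ 2 μ →L[ℂ] Lp ℂ 2 μ}
    (hP : ∀ v, ∀ φ : Lp ℂ 2 μ, P v φ =ᵐ[μ] (D v).indicator φ)
    (φ : Lp ℂ 2 μ) (F : Finset E1) :
    (∀ v, (∀ e ∈ F, s e = v) →
      (P v - ∑ e ∈ F, T e ∘L ContinuousLinearMap.adjoint (T e)) φ =ᵐ[μ]
        (D v \ ⋃ e ∈ F, R e).indicator φ) ∧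
    ∀ e, (T e ∘L ∑ f' ∈ F, T f' ∘L ContinuousLinearMap.adjoint (T f')) φ =ᵐ[μ]
      (R e ∩ finv e ⁻¹' ⋃ f' ∈ F, R f').indicator fun x =>
        (√(pushDeriv μ (D (r e)) (f e) x).toReal : ℂ) * φ (finv e x) := by
  have hsum := hbs.sum_comp_adjoint_ae_eq_indicator hT F φ
  refine ⟨fun v hF => ?_, fun e => ?_⟩
  · calc (P v - ∑ e ∈ F, T e ∘L ContinuousLinearMap.adjoint (T e)) φ
        =ᵐ[μ] P v φ - (∑ e ∈ F, T e ∘L ContinuousLinearMap.adjoint (T e)) φ := Lp.coeFn_sub _ _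
      _ =ᵐ[μ] (D v).indicator φ - (⋃ e ∈ F, R e).indicator φ := (hP v φ).sub hsum
      _ =ᵐ[μ] (D v \ ⋃ e ∈ F, R e).indicator φ :=
        indicator_sub_indicator_ae_eq (hbs.biUnion_ae_le hF) φ
  · rw [← Taction_indicator]
    exact (hT e _).trans ((hbs.isNonsingularIso e).Taction_congr_ae hsum)

/-- (i) For every `v ∉ V`, `P v − Σ_{e : s e = v} T_e T_e*` is the
multiplication operator by the indicator of `D v \ ⋃_{e : s e = v} R e`;  (ii) for every
edge `e` with `r e = v ∉ V`, the operator `T_e ∘ (Σ_{f : s f = v} T_f T_f*)` sends `φ` to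
the function agreeing `μ`-a.e. with `χ_{Q_e} · Φ_{f_e⁻¹}^{1/2} · (φ ∘ f_e⁻¹)`, where
`Q_e = (f_e⁻¹)⁻¹ (⋃_{f : s f = v} R f)` (the preimage being taken inside the domain
`R e` of `f_e⁻¹`). -/
theorem statement6 [MeasurableSpace X] {μ : Measure X} [SigmaFinite μ]
    (r s : E1 → V0) [Fintype V0] [Fintype E1] [DecidableEq V0] (V : Set V0)
    (R : E1 → Set X) (D : V0 → Set X) (f finv : E1 → X → X)
    (hbs : RelBranchingSystem r s V μ R D f finv)
    (T : E1 → (Lp ℂ 2 μ →L[ℂ] Lp ℂ 2 μ))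
    (hT : ∀ e, ∀ φ : Lp ℂ 2 μ, ⇑(T e φ) =ᵐ[μ] Taction μ (R e) (D (r e)) (f e) (finv e) ⇑φ)
    (P : V0 → (Lp ℂ 2 μ →L[ℂ] Lp ℂ 2 μ))
    (hP : ∀ v, ∀ φ : Lp ℂ 2 μ, ⇑(P v φ) =ᵐ[μ] (D v).indicator fun x => (φ : X → ℂ) x) :
    (∀ v, v ∉ V → ∀ φ : Lp ℂ 2 μ,
      ⇑((P v - ∑ e ∈ Finset.univ.filter (fun e => s e = v),
          T e ∘L ContinuousLinearMap.adjoint (T e)) φ) =ᵐ[μ]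
        (D v \ ⋃ e ∈ {e' | s e' = v}, R e).indicator fun x => (φ : X → ℂ) x) ∧
    (∀ e, r e ∉ V → ∀ φ : Lp ℂ 2 μ,
      ⇑((T e ∘L ∑ f' ∈ Finset.univ.filter (fun f' => s f' = r e),
          T f' ∘L ContinuousLinearMap.adjoint (T f')) φ) =ᵐ[μ]
        (R e ∩ finv e ⁻¹' (⋃ f' ∈ {f'' | s f'' = r e}, R f')).indicator fun x =>
          (Real.sqrt ((pushDeriv μ (D (r e)) (f e) x).toReal) : ℂ) *
            (φ : X → ℂ) (finv e x)) := by
  have hgen := statement6_general hbs hT hP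
  exact ⟨fun v _ φ => by simpa using (hgen φ {e | s e = v}).1 v (by simp),
    fun e _ φ => by simpa using (hgen φ {f' | s f' = r e}).2 e⟩

end
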